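/- Let 0 < q < 1, let C_1 := q^{1/6} f(-q) f(-q^10)/(f(-q^2) f(-q^5)) and C_4 := q^{2/3} f(-q^4) f(-q^40)/(f(-q^8) f(-q^20)), and set P := C_1·C_4 and Q := C_1/C_4. Then (P^3 + 1/P^3)[19(Q + 1/Q) + 8(Q^3 + 1/Q^3) + (Q^5 + 1/Q^5)] + (Q^6 + 1/Q^6) + 13(Q^4 + 1/Q^4) + 52(Q^2 + 1/Q^2) + 82 = P^6 + 1/P^6. -/

import Mathlib

open Real

/-- Ramanujan's theta function `φ(q) = ∑_{n=-∞}^∞ q^(n^2)`. -/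
noncomputable def phi (q : ℝ) : ℝ := ∑' n : ℤ, q ^ (n ^ 2)

/-- Ramanujan's theta function `ψ(q) = ∑_{n=0}^∞ q^(n(n+1)/2)`. -/
noncomputable def psi (q : ℝ) : ℝ := ∑' n : ℕ, q ^ (n * (n + 1) / 2)

/-- `fneg q` is Ramanujan's `f(-q) = ∑_{n=-∞}^∞ (-1)^n q^(n(3n-1)/2)`. -/
noncomputable def fneg (q : ℝ) : ℝ := ∑' n : ℤ, (-1 : ℝ) ^ n * q ^ (n * (3 * n - 1) / 2)

/-!
Write `x = Q + 1 / Q` and let `C₂` be the companion of `C₁` and `C₄` at `q²`. The numbers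
`u = C₁² - C₂² / C₁²` and `v = C₄² - C₂² / C₄²` are eta quotients, and so are the two terms in a
splitting of `C₂⁴ - 1 / C₂²`; comparing them gives `u * v = 4 * C₂²` and `u + v = C₂⁴ - 1 / C₂²`.
In terms of `b = (C₂ / P)²` and `Y = P³`, the first relation becomes `b + 1 / b = x² + 2` and the
second `b³ * Y² - 1 = x * (1 - b) * b * Y`. Multiplying the second by its conjugate under
`b ↦ 1 / b` eliminates `C₂` and leaves a quadratic equation for `Y + 1 / Y` over `ℤ[x]`, which is
the theorem.

The eta quotients come from identities of level five such as
`φ(q)² - φ(q⁵)² = 4 * q * f(q, q⁹) * f(q³, q⁷)`: a product of two theta series is a double series,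
which splits into products of theta series over any residue classes on which a shear of `ℤ²`
diagonalizes its quadratic exponent; the Jacobi triple product turns the outcome into products of
values of `f(-qⁿ)`.
-/

open Filter Finset Topology

section QPochhammer

variable {𝕜 : Type*} [NormedField 𝕜]

/-- The infinite `q`-Pochhammer symbol `(z; q)_∞`. -/
noncomputable def qPoch (z q : 𝕜) : 𝕜 := ∏' n : ℕ, (1 - z * q ^ n)

/-- The reciprocal of the finite `q`-Pochhammer symbol `(q; q)_n`, set to `0` for `n < 0` so that
sums of `q`-binomial coefficients can run over all of `ℤ`. -/
noncomputable def invPoch (q : 𝕜) (n : ℤ) : 𝕜 :=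
  if 0 ≤ n then (∏ k ∈ range n.toNat, (1 - q * q ^ k))⁻¹ else 0

theorem summable_norm_neg_mul_pow {q : 𝕜} (hq : ‖q‖ < 1) (z : 𝕜) :
    Summable fun n : ℕ => ‖-(z * q ^ n)‖ := by
  simpa only [norm_neg, norm_mul, norm_pow] using
    (summable_geometric_of_lt_one (norm_nonneg q) hq).mul_left ‖z‖

theorem one_sub_self_mul_pow_ne_zero {q : 𝕜} (hq : ‖q‖ < 1) (n : ℕ) : 1 - q * q ^ n ≠ 0 := by
  rw [← pow_succ']
  refine sub_ne_zero.mpr fun h => ?_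
  have := pow_lt_one₀ (norm_nonneg q) hq n.succ_ne_zero
  rw [← norm_pow, ← h, norm_one] at this
  exact lt_irrefl _ this

theorem norm_pow_lt_one {q : 𝕜} (hq : ‖q‖ < 1) {k : ℕ} (hk : k ≠ 0) : ‖q ^ k‖ < 1 :=
  norm_pow q k ▸ pow_lt_one₀ (norm_nonneg q) hq hk

theorem qPoch_one_left (q : 𝕜) : qPoch 1 q = 0 :=
  tprod_of_exists_eq_zero ⟨0, by simp⟩

theorem invPoch_natCast (q : 𝕜) (n : ℕ) : invPoch q n = (∏ k ∈ range n, (1 - q * q ^ k))⁻¹ := by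
  simp [invPoch]

theorem invPoch_of_neg (q : 𝕜) {n : ℤ} (hn : n < 0) : invPoch q n = 0 :=
  if_neg hn.not_ge

theorem invPoch_sub_one {q : 𝕜} (hq : ‖q‖ < 1) (n : ℤ) :
    invPoch q (n - 1) = (1 - q ^ n) * invPoch q n := by
  rcases lt_trichotomy n 0 with h | rfl | h
  · rw [invPoch_of_neg q (by lia), invPoch_of_neg q h, mul_zero]
  · simp [invPoch_of_neg]
  · obtain ⟨m, rfl⟩ : ∃ m : ℕ, n = (m + 1 : ℕ) := ⟨(n - 1).toNat, by lia⟩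
    rw [show ((m + 1 : ℕ) : ℤ) - 1 = m by simp, zpow_natCast, invPoch_natCast, invPoch_natCast,
      prod_range_succ, mul_inv, pow_succ', mul_left_comm,
      mul_inv_cancel₀ (one_sub_self_mul_pow_ne_zero hq m), mul_one]

variable [CompleteSpace 𝕜] {q : 𝕜} (hq : ‖q‖ < 1)

include hq

theorem tendsto_qPoch (z : 𝕜) :
    Tendsto (fun N => ∏ n ∈ range N, (1 - z * q ^ n)) atTop (𝓝 (qPoch z q)) := by
  simpa only [qPoch, sub_eq_add_neg] using
    (multipliable_one_add_of_summable (summable_norm_neg_mul_pow hq z)).tendsto_prod_tprod_nat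

theorem qPoch_self_ne_zero : qPoch q q ≠ 0 := by
  simpa only [qPoch, sub_eq_add_neg] using tprod_one_add_ne_zero_of_summable
    (fun n => sub_eq_add_neg (1 : 𝕜) (q * q ^ n) ▸ one_sub_self_mul_pow_ne_zero hq n)
    (summable_norm_neg_mul_pow hq q)

theorem qPoch_eq_one_sub_mul (z : 𝕜) : qPoch z q = (1 - z) * qPoch (z * q) q := by
  refine tendsto_nhds_unique ((tendsto_qPoch hq z).comp (tendsto_add_atTop_nat 1))
    (((tendsto_qPoch hq (z * q)).const_mul (1 - z)).congr fun N => ?_)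
  simp only [Function.comp, prod_range_succ', pow_zero, mul_one, mul_comm (1 - z), pow_succ',
    mul_assoc]

theorem qPoch_mul_qPoch_neg (z : 𝕜) : qPoch z q * qPoch (-z) q = qPoch (z ^ 2) (q ^ 2) := by
  refine tendsto_nhds_unique ((tendsto_qPoch hq z).mul (tendsto_qPoch hq (-z)))
    ((tendsto_qPoch (norm_pow_lt_one hq two_ne_zero) (z ^ 2)).congr fun N => ?_)
  rw [← prod_mul_distrib]
  exact prod_congr rfl fun r _ => by ring

theorem qPoch_eq_prod_residues (z : 𝕜) {k : ℕ} (hk : k ≠ 0) :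
    qPoch z q = ∏ r ∈ range k, qPoch (z * q ^ r) (q ^ k) := by
  have h_residues : Tendsto (fun N => ∏ r ∈ range k, ∏ n ∈ range N, (1 - z * q ^ r * (q ^ k) ^ n))
      atTop (𝓝 (∏ r ∈ range k, qPoch (z * q ^ r) (q ^ k))) :=
    tendsto_finsetProd _ fun r _ => tendsto_qPoch (norm_pow_lt_one hq hk) _
  have h_blocks := (tendsto_qPoch hq z).comp (tendsto_id.atTop_mul_const' (Nat.pos_of_ne_zero hk))
  refine tendsto_nhds_unique h_blocks (h_residues.congr fun N => ?_)
  simp only [Function.comp, id]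
  induction N with
  | zero => simp
  | succ N ih =>
    rw [Nat.succ_mul, prod_range_add, ← ih]
    simp only [prod_range_succ, prod_mul_distrib]
    exact congrArg _ (prod_congr rfl fun r _ => by ring)

theorem tendsto_invPoch : Tendsto (invPoch q) atTop (𝓝 (qPoch q q)⁻¹) := by
  rw [← Nat.map_cast_int_atTop, tendsto_map'_iff]
  exact ((tendsto_qPoch hq q).inv₀ (qPoch_self_ne_zero hq)).congr fun n =>
    (invPoch_natCast q n).symm

theorem exists_norm_invPoch_le : ∃ C, ∀ n, ‖invPoch q n‖ ≤ C := by
  obtain ⟨C, hC⟩ := (Metric.isBounded_range_of_tendsto _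
    ((tendsto_invPoch hq).comp tendsto_natCast_atTop_atTop)).exists_norm_le
  refine ⟨C, fun n => ?_⟩
  rcases lt_or_ge n 0 with h | h
  · rw [invPoch_of_neg q h, norm_zero]
    exact (norm_nonneg _).trans (hC _ (Set.mem_range_self 0))
  · lift n to ℕ using h
    exact hC _ (Set.mem_range_self n)

end QPochhammer

section TripleProduct

/-- The exponent `n (n - 1) / 2`; the integer division is exact. -/
def tri (n : ℤ) : ℤ := n * (n - 1) / 2

theorem two_mul_tri (n : ℤ) : 2 * tri n = n * (n - 1) :=
  Int.two_mul_ediv_two_of_even (Int.even_mul_pred_self n)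

theorem tri_neg (n : ℤ) : tri (-n) = tri n + n := by
  linarith [two_mul_tri n, two_mul_tri (-n)]

theorem tri_sub_one (n : ℤ) : tri (n - 1) = tri n - n + 1 := by
  linarith [two_mul_tri n, two_mul_tri (n - 1)]

theorem tri_add (m n : ℤ) : tri (m + n) = tri m + tri n + m * n := by
  linarith [two_mul_tri m, two_mul_tri n, two_mul_tri (m + n)]

variable {𝕜 : Type*} [NormedField 𝕜]

/-- The bilateral theta series `∑ zⁿ q^(n(n-1)/2)`; Ramanujan's `f(a, b)` is `theta a (a * b)`. -/
noncomputable def theta (z q : 𝕜) : 𝕜 := ∑' n : ℤ, z ^ n * q ^ tri n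

/-- The `n`-th term of the finite triple product: a `q`-binomial coefficient `[N + M, N + n]`
times the `n`-th term of the theta series. -/
noncomputable def finiteTripleTerm (z q : 𝕜) (N M : ℕ) (n : ℤ) : 𝕜 :=
  (∏ k ∈ range (N + M), (1 - q * q ^ k)) * invPoch q (N + n) * invPoch q (M - n) *
    (z ^ n * q ^ tri n)

variable {q z : 𝕜}

theorem zpow_mul_zpow_tri_neg (hq0 : q ≠ 0) (z : 𝕜) (n : ℤ) :
    z ^ (-n) * q ^ tri (-n) = (q / z) ^ n * q ^ tri n := by
  rw [tri_neg, zpow_add₀ hq0, div_zpow, zpow_neg, div_eq_mul_inv]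
  ring

theorem finiteTripleTerm_neg (hq0 : q ≠ 0) (z : 𝕜) (N M : ℕ) (n : ℤ) :
    finiteTripleTerm z q N M (-n) = finiteTripleTerm (q / z) q M N n := by
  rw [finiteTripleTerm, finiteTripleTerm, zpow_mul_zpow_tri_neg hq0, ← sub_eq_add_neg,
    sub_neg_eq_add, add_comm M N]
  ring

theorem finiteTripleTerm_succ (hq : ‖q‖ < 1) (hz : z ≠ 0) (hq0 : q ≠ 0) (N M : ℕ) (n : ℤ) :
    finiteTripleTerm z q N (M + 1) n =
      finiteTripleTerm z q N M n + z * q ^ M * finiteTripleTerm z q N M (n - 1) := by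
  have h_left : invPoch q (N + (n - 1)) = (1 - q ^ (N + n)) * invPoch q (N + n) := by
    rw [← add_sub_assoc, invPoch_sub_one hq]
  have h_right : invPoch q (M - n) = (1 - q ^ (M + 1 - n)) * invPoch q (M + 1 - n) := by
    rw [← invPoch_sub_one hq, add_sub_right_comm, add_sub_cancel_right]
  have h_term : z * q ^ M * (z ^ (n - 1) * q ^ tri (n - 1)) =
      q ^ (M + 1 - n) * (z ^ n * q ^ tri n) := by
    rw [tri_sub_one, show M + 1 - n = M + -n + 1 by ring, sub_eq_add_neg (tri n)]
    simp only [zpow_sub_one₀ hz, zpow_add₀ hq0, zpow_natCast, zpow_one]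
    field_simp
  have h_split : q * q ^ (N + M) = q ^ (M + 1 - n) * q ^ (N + n) := by
    rw [← zpow_add₀ hq0, ← pow_succ', ← zpow_natCast]
    congr 1
    push_cast
    ring
  simp only [finiteTripleTerm]
  rw [← add_assoc, prod_range_succ, h_split, h_left, show M - (n - 1) = M + 1 - n by ring, h_right,
    Nat.cast_succ]
  linear_combination -(∏ k ∈ range (N + M), (1 - q * q ^ k)) * (1 - q ^ (N + n)) *
    invPoch q (N + n) * invPoch q (M + 1 - n) * h_term

theorem hasSum_finiteTripleTerm_succ (hq : ‖q‖ < 1) (hz : z ≠ 0) (hq0 : q ≠ 0) {N M : ℕ} {s : 𝕜}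
    (hs : HasSum (finiteTripleTerm z q N M) s) :
    HasSum (finiteTripleTerm z q N (M + 1)) (s * (1 + z * q ^ M)) := by
  have h_shift := ((Equiv.subRight (1 : ℤ)).hasSum_iff.mpr hs).mul_left (z * q ^ M)
  rw [mul_one_add, mul_comm s (z * q ^ M)]
  exact (hs.add h_shift).congr_fun fun n => finiteTripleTerm_succ hq hz hq0 N M n

theorem hasSum_finiteTripleTerm_zero_left (hq : ‖q‖ < 1) (hz : z ≠ 0) (hq0 : q ≠ 0) (M : ℕ) :
    HasSum (finiteTripleTerm z q 0 M) (∏ k ∈ range M, (1 + z * q ^ k)) := by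
  induction M with
  | zero =>
    convert hasSum_single (f := finiteTripleTerm z q 0 0) 0 fun n hn => ?_
    · simp [finiteTripleTerm, invPoch, tri]
    · rcases lt_or_gt_of_ne hn with h | h
      · simp [finiteTripleTerm, invPoch_of_neg q h]
      · simp [finiteTripleTerm, invPoch_of_neg q (neg_neg_of_pos h)]
  | succ M ih => exact prod_range_succ (fun k => 1 + z * q ^ k) M ▸
      hasSum_finiteTripleTerm_succ hq hz hq0 ih

theorem hasSum_finiteTripleTerm (hq : ‖q‖ < 1) (hz : z ≠ 0) (hq0 : q ≠ 0) (N M : ℕ) :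
    HasSum (finiteTripleTerm z q N M)
      ((∏ k ∈ range N, (1 + q / z * q ^ k)) * ∏ k ∈ range M, (1 + z * q ^ k)) := by
  induction M with
  | zero =>
    simpa only [Function.comp_def, Equiv.neg_apply, finiteTripleTerm_neg hq0,
      div_div_cancel₀ hq0, prod_range_zero, mul_one] using (Equiv.neg ℤ).hasSum_iff.mpr
        (hasSum_finiteTripleTerm_zero_left hq (div_ne_zero hq0 hz) hq0 N)
  | succ M ih =>
    rw [prod_range_succ, ← mul_assoc]
    exact hasSum_finiteTripleTerm_succ hq hz hq0 ih

theorem summable_norm_zpow_mul_zpow_tri (hq : ‖q‖ < 1) (hz : z ≠ 0) (hq0 : q ≠ 0) :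
    Summable fun n : ℤ => ‖z ^ n * q ^ tri n‖ := by
  have h_nat {w : 𝕜} (hw : w ≠ 0) : Summable fun n : ℕ => ‖w ^ (n : ℤ) * q ^ tri n‖ := by
    have h_ne (n : ℕ) : ‖w ^ (n : ℤ) * q ^ tri n‖ ≠ 0 :=
      norm_ne_zero_iff.mpr (mul_ne_zero (zpow_ne_zero _ hw) (zpow_ne_zero _ hq0))
    have h_succ (n : ℕ) : ‖w ^ ((n + 1 : ℕ) : ℤ) * q ^ tri (n + 1 : ℕ)‖ =
        ‖w * q ^ n‖ * ‖w ^ (n : ℤ) * q ^ tri n‖ := by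
      rw [← norm_mul, Nat.cast_succ, tri_add, show tri 1 = 0 from rfl, zpow_add_one₀ hw]
      simp only [zpow_add₀ hq0, mul_one, zpow_zero, zpow_natCast]
      ring_nf
    have h_ratio : Tendsto (fun n : ℕ => ‖w * q ^ n‖) atTop (𝓝 0) := by
      simpa using ((tendsto_pow_atTop_nhds_zero_of_norm_lt_one hq).const_mul w).norm
    refine summable_of_ratio_test_tendsto_lt_one zero_lt_one (.of_forall h_ne)
      (h_ratio.congr fun n => ?_)
    rw [norm_norm, norm_norm, h_succ, mul_div_cancel_right₀ _ (h_ne n)]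
  refine Summable.of_nat_of_neg (h_nat hz) ?_
  simpa only [zpow_mul_zpow_tri_neg hq0] using h_nat (div_ne_zero hq0 hz)

theorem hasSum_theta [CompleteSpace 𝕜] (hq : ‖q‖ < 1) (hz : z ≠ 0) (hq0 : q ≠ 0) :
    HasSum (fun n : ℤ => z ^ n * q ^ tri n) (theta z q) :=
  (summable_norm_zpow_mul_zpow_tri hq hz hq0).of_norm.hasSum

theorem tendsto_finiteTripleTerm [CompleteSpace 𝕜] (hq : ‖q‖ < 1) (z : 𝕜) (n : ℤ) :
    Tendsto (fun N => finiteTripleTerm z q N N n) atTop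
      (𝓝 ((qPoch q q)⁻¹ * (z ^ n * q ^ tri n))) := by
  have h_cast : Tendsto (fun N : ℕ => (N : ℤ)) atTop atTop := tendsto_natCast_atTop_atTop
  have h_prod := (tendsto_qPoch hq q).comp
    (tendsto_atTop_mono (fun N : ℕ => N.le_add_right N) tendsto_id)
  have h_left := (tendsto_invPoch hq).comp (tendsto_atTop_add_const_right _ n h_cast)
  have h_right := (tendsto_invPoch hq).comp (tendsto_atTop_add_const_right _ (-n) h_cast)
  have h_lim := ((h_prod.mul h_left).mul h_right).mul_const (z ^ n * q ^ tri n)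
  rwa [mul_inv_cancel₀ (qPoch_self_ne_zero hq), one_mul] at h_lim

theorem exists_norm_finiteTripleTerm_le [CompleteSpace 𝕜] (hq : ‖q‖ < 1) (z : 𝕜) :
    ∃ C, ∀ N n, ‖finiteTripleTerm z q N N n‖ ≤ C * ‖z ^ n * q ^ tri n‖ := by
  obtain ⟨C, hC⟩ := exists_norm_invPoch_le hq
  obtain ⟨D, hD⟩ := (Metric.isBounded_range_of_tendsto _ (tendsto_qPoch hq q)).exists_norm_le
  have hC0 : 0 ≤ C := (norm_nonneg _).trans (hC 0)
  have hD0 : 0 ≤ D := (norm_nonneg _).trans (hD _ (Set.mem_range_self 0))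
  refine ⟨D * C * C, fun N n => ?_⟩
  rw [finiteTripleTerm, norm_mul, norm_mul, norm_mul]
  gcongr
  exacts [hD _ (Set.mem_range_self _), hC _, hC _]

/-- The Jacobi triple product identity. -/
theorem theta_eq_qPoch_mul [CompleteSpace 𝕜] (hq : ‖q‖ < 1) (hz : z ≠ 0) (hq0 : q ≠ 0) :
    theta z q = qPoch q q * qPoch (-(q / z)) q * qPoch (-z) q := by
  obtain ⟨C, hC⟩ := exists_norm_finiteTripleTerm_le hq z
  have h_sum : Tendsto (fun N => ∑' n, finiteTripleTerm z q N N n) atTop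
      (𝓝 ((qPoch q q)⁻¹ * theta z q)) := by
    rw [theta, ← tsum_mul_left]
    exact tendsto_tsum_of_dominated_convergence
      ((summable_norm_zpow_mul_zpow_tri hq hz hq0).mul_left C)
      (tendsto_finiteTripleTerm hq z) (.of_forall hC)
  have h_prod : Tendsto (fun N => ∑' n, finiteTripleTerm z q N N n) atTop
      (𝓝 (qPoch (-(q / z)) q * qPoch (-z) q)) := by
    refine ((tendsto_qPoch hq _).mul (tendsto_qPoch hq _)).congr fun N => ?_
    simp only [(hasSum_finiteTripleTerm hq hz hq0 N N).tsum_eq, neg_mul, sub_neg_eq_add]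
  rw [mul_assoc, ← tendsto_nhds_unique h_sum h_prod, mul_inv_cancel_left₀ (qPoch_self_ne_zero hq)]

end TripleProduct

section Dissection

theorem hasSum_of_equiv_prod {α β ι M : Type*} [Fintype ι] [AddCommMonoid M] [TopologicalSpace M]
    [ContinuousAdd M] (e : β × ι ≃ α) {F : α → M} {s : ι → M}
    (h : ∀ c, HasSum (fun b => F (e (b, c))) (s c)) : HasSum F (∑ c, s c) := by
  classical
  have h_class (c : ι) : HasSum (fun p : β × ι => if p.2 = c then F (e p) else 0) (s c) := by
    refine ((Prod.mk_left_injective c).hasSum_iff fun p hp => if_neg ?_).mp ?_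
    · rintro rfl
      exact hp ⟨p.1, rfl⟩
    · simpa [Function.comp_def] using h c
  refine e.hasSum_iff.mp ((hasSum_sum fun c _ => h_class c).congr_fun fun p => ?_)
  simp

theorem hasSum_of_residues {M : Type*} [AddCommMonoid M] [TopologicalSpace M] [ContinuousAdd M]
    (N : ℕ) [NeZero N] (a : ℤ) {F : ℤ × ℤ → M} {s : Fin N → M}
    (h : ∀ c : Fin N, HasSum (fun p : ℤ × ℤ => F (p.1 * N + (c : ℕ), p.2 + a * p.1)) (s c)) :
    HasSum F (∑ c, s c) := by
  let shear : ℤ × ℤ ≃ ℤ × ℤ := Equiv.prodShear (.refl ℤ) fun i => Equiv.addRight (a * i)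
  let residue : (ℤ × ℤ) × Fin N ≃ ℤ × ℤ :=
    (Equiv.prodAssoc ..).trans <| ((Equiv.refl ℤ).prodCongr (Equiv.prodComm ..)).trans <|
      (Equiv.prodAssoc ..).symm.trans <| (Int.divModEquiv N).symm.prodCongr (.refl ℤ)
  exact hasSum_of_equiv_prod ((shear.prodCongr (.refl _)).trans residue) h

variable {𝕜 : Type*} [NormedField 𝕜] {q x : 𝕜}

theorem theta_div (hq0 : q ≠ 0) (z : 𝕜) : theta (q / z) q = theta z q := by
  rw [theta, theta, ← (Equiv.neg ℤ).tsum_eq (fun n => z ^ n * q ^ tri n)]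
  exact tsum_congr fun n => (zpow_mul_zpow_tri_neg hq0 z n).symm

theorem theta_mul_left {z : 𝕜} (hz : z ≠ 0) (hq0 : q ≠ 0) :
    theta (z * q) q = z⁻¹ * theta z q := by
  rw [theta, theta, ← (Equiv.addRight (1 : ℤ)).tsum_eq (fun n => z ^ n * q ^ tri n),
    ← tsum_mul_left]
  refine tsum_congr fun n => ?_
  rw [Equiv.coe_addRight, tri_add, show tri 1 = 0 from rfl, zpow_add_one₀ hz, mul_zpow]
  simp only [mul_one, add_zero, zpow_add₀ hq0]
  field_simp

theorem theta_inv {z : 𝕜} (hz : z ≠ 0) (hq0 : q ≠ 0) : theta z⁻¹ q = z⁻¹ * theta z q := by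
  rw [← theta_mul_left hz hq0, ← theta_div hq0 z⁻¹, div_inv_eq_mul, mul_comm]

theorem theta_pow_eq_of_add_eq (hq0 : q ≠ 0) {m n k : ℕ} (h : m + n = k) :
    theta (q ^ m) (q ^ k) = theta (q ^ n) (q ^ k) := by
  rw [← h, ← theta_div (pow_ne_zero _ hq0) (q ^ m), pow_add, mul_div_cancel_left₀ _
    (pow_ne_zero m hq0)]

theorem theta_pow_add (hq0 : q ≠ 0) (m k : ℕ) :
    theta (q ^ (m + k)) (q ^ k) = (q ^ m)⁻¹ * theta (q ^ m) (q ^ k) := by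
  rw [pow_add, theta_mul_left (pow_ne_zero m hq0) (pow_ne_zero k hq0)]

theorem zpow_mul_zpow_tri_monomial (hq0 : q ≠ 0) (x : 𝕜) (a b : ℤ) (k : ℕ) (n : ℤ) :
    (x ^ a * q ^ b) ^ n * (q ^ k) ^ tri n = x ^ (a * n) * q ^ (k * tri n + b * n) := by
  rw [mul_zpow, ← zpow_mul, ← zpow_mul, ← zpow_natCast q, ← zpow_mul, zpow_add₀ hq0]
  ring

variable [CompleteSpace 𝕜] (hq : ‖q‖ < 1) (hx : x ≠ 0) (hq0 : q ≠ 0)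

include hq hx hq0

theorem hasSum_mul_theta (a b d d' : ℤ) {k : ℕ} (hk : k ≠ 0) {A B : ℤ → ℤ}
    (hA : ∀ n, A n = a * n + d) (hB : ∀ n, B n = k * tri n + b * n + d') :
    HasSum (fun n => x ^ A n * q ^ B n) (x ^ d * q ^ d' * theta (x ^ a * q ^ b) (q ^ k)) := by
  refine ((hasSum_theta (norm_pow_lt_one hq hk)
    (mul_ne_zero (zpow_ne_zero a hx) (zpow_ne_zero b hq0)) (pow_ne_zero k hq0)).mul_left
      _).congr_fun fun n => ?_
  rw [hA, hB, zpow_mul_zpow_tri_monomial hq0, zpow_add₀ hx, zpow_add₀ hq0]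
  ring

theorem hasSum_mul_theta_mul_theta (a b a' b' d d' : ℤ) {k k' : ℕ} (hk : k ≠ 0) (hk' : k' ≠ 0)
    {A B : ℤ × ℤ → ℤ} (hA : ∀ m n, A (m, n) = a * m + a' * n + d)
    (hB : ∀ m n, B (m, n) = k * tri m + b * m + (k' * tri n + b' * n) + d') :
    HasSum (fun p => x ^ A p * q ^ B p)
      (x ^ d * q ^ d' * (theta (x ^ a * q ^ b) (q ^ k) * theta (x ^ a' * q ^ b') (q ^ k'))) := by
  have h_summable (a b : ℤ) {k : ℕ} (hk : k ≠ 0) := summable_norm_zpow_mul_zpow_tri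
    (norm_pow_lt_one hq hk) (mul_ne_zero (zpow_ne_zero a hx) (zpow_ne_zero b hq0))
    (pow_ne_zero k hq0)
  rw [theta, theta, tsum_mul_tsum_of_summable_norm (h_summable a b hk) (h_summable a' b' hk')]
  refine ((summable_mul_of_summable_norm (h_summable a b hk)
    (h_summable a' b' hk')).hasSum.mul_left _).congr_fun fun ⟨m, n⟩ => ?_
  rw [hA, hB, zpow_mul_zpow_tri_monomial hq0, zpow_mul_zpow_tri_monomial hq0]
  simp only [zpow_add₀ hx, zpow_add₀ hq0]
  ring

theorem theta_eq_add :
    theta x q = theta (x ^ 2 * q) (q ^ 4) + x * theta (x ^ 2 * q ^ 3) (q ^ 4) := by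
  have h_class (c : Fin 2) : HasSum
      (fun m : ℤ => x ^ (m * 2 + (c : ℕ)) * q ^ tri (m * 2 + (c : ℕ)))
      (x ^ (c : ℤ) * q ^ tri c * theta (x ^ (2 : ℤ) * q ^ (2 * c + 1 : ℤ)) (q ^ 4)) := by
    refine hasSum_mul_theta hq hx hq0 _ _ _ _ four_ne_zero (fun m => ?_) fun m => ?_
    · ring
    · push_cast
      linarith [two_mul_tri m, two_mul_tri c, two_mul_tri (m * 2 + (c : ℕ))]
  have h_sum := hasSum_of_equiv_prod (Int.divModEquiv 2).symm
    (F := fun n => x ^ n * q ^ tri n) h_class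
  rw [(hasSum_theta hq hx hq0).unique h_sum, Fin.sum_univ_two]
  norm_num [tri, zpow_ofNat]

theorem theta_sq : theta x q ^ 2 = ∑ c : Fin 5, x ^ (c : ℤ) * q ^ tri c *
    (theta (x ^ (3 : ℤ) * q ^ (c + 1 : ℤ)) (q ^ 5) *
      theta (x ^ (-1 : ℤ) * q ^ (3 - 2 * c : ℤ)) (q ^ 5)) := by
  let e : ℤ × ℤ ≃ ℤ × ℤ :=
    (Equiv.prodShear (.refl ℤ) fun m => Equiv.addRight (2 * m)).trans (Equiv.prodComm ℤ ℤ)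
  let F : ℤ × ℤ → 𝕜 := fun p => x ^ (p.1 - p.2) * q ^ (tri p.2 + tri (p.1 - 2 * p.2))
  have h_sq : HasSum F (theta x q ^ 2) := by
    have h_comp : F ∘ e = fun p => x ^ (p.1 + p.2) * q ^ (tri p.1 + tri p.2) := by
      ext ⟨m, n⟩
      change x ^ (n + 2 * m - m) * q ^ (tri m + tri (n + 2 * m - 2 * m)) = _
      ring_nf
    rw [← e.hasSum_iff, h_comp]
    simpa [sq] using hasSum_mul_theta_mul_theta hq hx hq0 1 0 1 0 0 0 one_ne_zero one_ne_zero
      (A := fun p => p.1 + p.2) (B := fun p => tri p.1 + tri p.2) (fun m n => by ring)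
      fun m n => by push_cast; ring
  have h_classes : HasSum F (∑ c : Fin 5, x ^ (c : ℤ) * q ^ tri c *
      (theta (x ^ (3 : ℤ) * q ^ (c + 1 : ℤ)) (q ^ 5) *
        theta (x ^ (-1 : ℤ) * q ^ (3 - 2 * c : ℤ)) (q ^ 5))) := by
    refine hasSum_of_residues 5 2 fun c => ?_
    refine hasSum_mul_theta_mul_theta hq hx hq0 _ _ _ _ _ _ (by norm_num) (by norm_num)
      (fun i j => ?_) fun i j => ?_
    · push_cast
      ring
    · push_cast
      linarith [two_mul_tri i, two_mul_tri j, two_mul_tri c, two_mul_tri (j + 2 * i),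
        two_mul_tri (i * 5 + (c : ℕ) - 2 * (j + 2 * i))]
  exact h_sq.unique h_classes

theorem theta_mul_add_theta_mul :
    theta (x ^ 2 * q ^ 5) (q ^ 10) * theta (q ^ 2) (q ^ 2) +
        x * q * (theta (x ^ 2 * q ^ 10) (q ^ 10) * theta q (q ^ 2)) =
      ∑ c : Fin 3, q ^ (c * (c + 1) : ℤ) *
        (theta (x * q ^ (5 * c + 10 : ℤ)) (q ^ 15) * theta (x * q ^ (1 - c : ℤ)) (q ^ 3)) := by
  let B (m n : ℤ) : ℤ := 3 * tri m + m + 2 * tri n + 2 * n - m * n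
  have h_even_odd : HasSum (fun p : ℤ × ℤ => x ^ p.1 * q ^ B p.1 p.2)
      (∑ c : Fin 2, x ^ (c : ℤ) * q ^ (c : ℤ) *
        (theta (x ^ (2 : ℤ) * q ^ (5 * c + 5 : ℤ)) (q ^ 10) *
          theta (x ^ (0 : ℤ) * q ^ (2 - c : ℤ)) (q ^ 2))) := by
    refine hasSum_of_residues 2 1 fun c => ?_
    refine hasSum_mul_theta_mul_theta hq hx hq0 _ _ _ _ _ _ (by norm_num) (by norm_num)
      (fun m n => ?_) fun m n => ?_
    · push_cast
      ring
    · have hc : ((c : ℕ) : ℤ) * ((c : ℕ) - 1) = 0 := by fin_cases c <;> rfl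
      push_cast
      linarith [two_mul_tri m, two_mul_tri n, two_mul_tri (n + 1 * m),
        two_mul_tri (m * 2 + (c : ℕ))]
  have h_mod_three : HasSum (fun p : ℤ × ℤ => x ^ p.2 * q ^ B p.2 p.1)
      (∑ c : Fin 3, x ^ (0 : ℤ) * q ^ (c * (c + 1) : ℤ) *
        (theta (x ^ (1 : ℤ) * q ^ (5 * c + 10 : ℤ)) (q ^ 15) *
          theta (x ^ (1 : ℤ) * q ^ (1 - c : ℤ)) (q ^ 3))) := by
    refine hasSum_of_residues 3 1 fun c => ?_
    refine hasSum_mul_theta_mul_theta hq hx hq0 _ _ _ _ _ _ (by norm_num) (by norm_num)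
      (fun j i => ?_) fun j i => ?_
    · ring
    · push_cast
      linarith [two_mul_tri i, two_mul_tri j, two_mul_tri (i + 1 * j),
        two_mul_tri (j * 3 + (c : ℕ))]
  have h := ((Equiv.prodComm ℤ ℤ).hasSum_iff.mpr h_even_odd).unique h_mod_three
  simpa [zpow_ofNat] using h

end Dissection

section ThetaFunctions

variable {q : ℝ}

theorem phi_eq_theta (hq0 : q ≠ 0) : phi q = theta q (q ^ 2) := by
  refine tsum_congr fun n => ?_
  rw [← zpow_natCast, ← zpow_mul, ← zpow_add₀ hq0, Nat.cast_two, two_mul_tri]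
  ring_nf

theorem fneg_eq_theta (hq0 : q ≠ 0) : fneg q = theta (-q) (q ^ 3) := by
  refine tsum_congr fun n => ?_
  have h_exp : n + (3 : ℕ) * tri n = n * (3 * n - 1) / 2 := by
    have h := two_mul_tri n
    push_cast
    grind
  rw [← neg_one_mul q, mul_zpow, ← zpow_natCast, ← zpow_mul, mul_assoc, ← zpow_add₀ hq0, h_exp]

variable (hq : ‖q‖ < 1) (hq0 : q ≠ 0)

include hq hq0

theorem two_mul_psi_eq_theta : 2 * psi q = theta q q := by
  have h_tri (n : ℕ) : ((n * (n + 1) / 2 : ℕ) : ℤ) = n + tri n := by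
    have h := two_mul_tri n
    push_cast
    grind
  have h_nat (n : ℕ) : q ^ (n : ℤ) * q ^ tri n = q ^ (n * (n + 1) / 2) := by
    rw [← zpow_add₀ hq0, ← zpow_natCast q, h_tri]
  have h_neg (n : ℕ) : q ^ (-(n + 1) : ℤ) * q ^ tri (-(n + 1)) = q ^ (n * (n + 1) / 2) := by
    rw [tri_neg, tri_add, ← h_nat, ← zpow_add₀ hq0, ← zpow_add₀ hq0, show tri 1 = 0 from rfl]
    ring_nf
  have h_nat_sum : Summable fun n : ℕ => q ^ (n * (n + 1) / 2) := by
    simpa only [Function.comp_def, h_nat] using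
      (hasSum_theta hq hq0 hq0).summable.comp_injective Nat.cast_injective
  rw [theta, tsum_of_nat_of_neg_add_one (by simpa only [h_nat] using h_nat_sum)
    (by simpa only [h_neg] using h_nat_sum), two_mul]
  simp only [h_nat, h_neg, psi]

theorem fneg_eq_qPoch : fneg q = qPoch q q := by
  rw [fneg_eq_theta hq0, theta_eq_qPoch_mul (norm_pow_lt_one hq three_ne_zero)
    (neg_ne_zero.mpr hq0) (pow_ne_zero 3 hq0), qPoch_eq_prod_residues hq q three_ne_zero]
  simp only [prod_range_succ, prod_range_zero]
  have : q ^ 3 / q = q ^ 2 := by field_simp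
  rw [div_neg, this]
  ring_nf

theorem fneg_ne_zero : fneg q ≠ 0 := fneg_eq_qPoch hq hq0 ▸ qPoch_self_ne_zero hq

theorem fneg_pow_ne_zero {k : ℕ} (hk : k ≠ 0) : fneg (q ^ k) ≠ 0 :=
  fneg_ne_zero (norm_pow_lt_one hq hk) (pow_ne_zero k hq0)

theorem fneg_pow_eq_qPoch {k : ℕ} (hk : k ≠ 0) : fneg (q ^ k) = qPoch (q ^ k) (q ^ k) :=
  fneg_eq_qPoch (norm_pow_lt_one hq hk) (pow_ne_zero k hq0)

theorem qPoch_neg_mul_fneg : qPoch (-q) q * fneg q = fneg (q ^ 2) := by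
  rw [fneg_eq_qPoch hq hq0, fneg_pow_eq_qPoch hq hq0 two_ne_zero, mul_comm,
    qPoch_mul_qPoch_neg hq]

theorem qPoch_sq_mul_fneg : qPoch q (q ^ 2) * fneg (q ^ 2) = fneg q := by
  rw [fneg_eq_qPoch hq hq0, fneg_pow_eq_qPoch hq hq0 two_ne_zero,
    qPoch_eq_prod_residues hq q two_ne_zero, prod_range_succ, prod_range_one, pow_zero, pow_one,
    mul_one, sq]

theorem fneg_neg_mul_fneg : fneg (-q) * fneg q * fneg (q ^ 4) = fneg (q ^ 2) ^ 3 := by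
  have h_neg := qPoch_sq_mul_fneg (q := -q) (by rwa [norm_neg]) (neg_ne_zero.mpr hq0)
  have h_pos := qPoch_sq_mul_fneg hq hq0
  have h_sq := qPoch_sq_mul_fneg (norm_pow_lt_one hq two_ne_zero) (pow_ne_zero 2 hq0)
  have h_mul := qPoch_mul_qPoch_neg (norm_pow_lt_one hq two_ne_zero) q
  rw [neg_sq] at h_neg
  rw [← pow_mul] at h_sq h_mul
  rw [← h_neg, ← h_pos]
  linear_combination fneg (q ^ 2) ^ 2 * fneg (q ^ 4) * h_mul + fneg (q ^ 2) ^ 2 * h_sq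

theorem psi_mul_fneg : psi q * fneg q = fneg (q ^ 2) ^ 2 := by
  have h := theta_eq_qPoch_mul hq hq0 hq0
  rw [div_self hq0, qPoch_eq_one_sub_mul hq (-1), neg_one_mul, ← two_mul_psi_eq_theta hq hq0,
    ← fneg_eq_qPoch hq hq0] at h
  linear_combination fneg q / 2 * h +
    (qPoch (-q) q * fneg q + fneg (q ^ 2)) * qPoch_neg_mul_fneg hq hq0

theorem phi_neg_mul_fneg : phi (-q) * fneg (q ^ 2) = fneg q ^ 2 := by
  have h := theta_eq_qPoch_mul (norm_pow_lt_one hq two_ne_zero) (neg_ne_zero.mpr hq0)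
    (pow_ne_zero 2 hq0)
  rw [div_neg, neg_neg, neg_neg, pow_two q, mul_div_cancel_right₀ q hq0, ← pow_two,
    ← fneg_pow_eq_qPoch hq hq0 two_ne_zero] at h
  rw [phi_eq_theta (neg_ne_zero.mpr hq0), neg_sq]
  linear_combination fneg (q ^ 2) * h +
    (qPoch q (q ^ 2) * fneg (q ^ 2) + fneg q) * qPoch_sq_mul_fneg hq hq0

theorem phi_mul_fneg : phi q * (fneg q ^ 2 * fneg (q ^ 4) ^ 2) = fneg (q ^ 2) ^ 5 := by
  have h := phi_neg_mul_fneg (q := -q) (by rwa [norm_neg]) (neg_ne_zero.mpr hq0)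
  rw [neg_neg, neg_sq] at h
  apply mul_right_cancel₀ (fneg_ne_zero (norm_pow_lt_one hq two_ne_zero) (pow_ne_zero 2 hq0))
  linear_combination (fneg q ^ 2 * fneg (q ^ 4) ^ 2) * h + (fneg (-q) * fneg q * fneg (q ^ 4) +
    fneg (q ^ 2) ^ 3) * fneg_neg_mul_fneg hq hq0

theorem theta_fifths_mul_fneg : theta q (q ^ 5) * theta (q ^ 2) (q ^ 5) *
    (fneg q * fneg (q ^ 10)) = fneg (q ^ 2) * fneg (q ^ 5) ^ 3 := by
  have hq5 := norm_pow_lt_one hq (k := 5) (by norm_num)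
  have h5 := pow_ne_zero 5 hq0
  have h_residues := qPoch_eq_prod_residues hq (-q) (k := 5) (by norm_num)
  have h_fneg := qPoch_neg_mul_fneg hq5 h5
  have h_div : q ^ 5 / q = q ^ 4 := by field_simp
  have h_div_sq : q ^ 5 / q ^ 2 = q ^ 3 := by field_simp
  simp only [prod_range_succ, prod_range_zero, neg_mul, ← pow_succ', one_mul, zero_add,
    Nat.reduceAdd] at h_residues
  rw [pow_one] at h_residues
  rw [← pow_mul] at h_fneg
  rw [theta_eq_qPoch_mul hq5 hq0 h5, theta_eq_qPoch_mul hq5 (pow_ne_zero 2 hq0) h5,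
    ← fneg_eq_qPoch hq5 h5, h_div, h_div_sq, ← qPoch_neg_mul_fneg hq hq0, ← h_fneg, h_residues]
  ring

theorem theta_neg_tenths_mul_fneg : theta (-q) (q ^ 10) * theta (-q ^ 3) (q ^ 10) *
    (fneg (q ^ 2) * fneg (q ^ 5)) = fneg q * fneg (q ^ 10) ^ 3 := by
  have hq10 := norm_pow_lt_one hq (k := 10) (by norm_num)
  have h10 := pow_ne_zero 10 hq0
  have h_residues := qPoch_eq_prod_residues (norm_pow_lt_one hq two_ne_zero) q (k := 5)
    (by norm_num)
  have h_fneg := qPoch_sq_mul_fneg (norm_pow_lt_one hq (k := 5) (by norm_num))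
    (pow_ne_zero 5 hq0)
  have h_div : q ^ 10 / -q = -q ^ 9 := by field_simp
  have h_div_cube : q ^ 10 / -q ^ 3 = -q ^ 7 := by field_simp
  simp only [prod_range_succ, prod_range_zero, one_mul, ← pow_mul, ← pow_succ', Nat.reduceMul,
    Nat.reduceAdd] at h_residues
  rw [pow_one] at h_residues
  simp only [← pow_mul, Nat.reduceMul] at h_fneg
  rw [theta_eq_qPoch_mul hq10 (neg_ne_zero.mpr hq0) h10,
    theta_eq_qPoch_mul hq10 (neg_ne_zero.mpr (pow_ne_zero 3 hq0)) h10,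
    ← fneg_eq_qPoch hq10 h10, h_div, h_div_cube, ← qPoch_sq_mul_fneg hq hq0, ← h_fneg, h_residues]
  simp only [neg_neg]
  ring

end ThetaFunctions

section QuinticIdentities

theorem theta_zpow_sq {𝕜 : Type*} [NormedField 𝕜] [CompleteSpace 𝕜] {q : 𝕜} (hq : ‖q‖ < 1)
    (hq0 : q ≠ 0) (a : ℤ) {k : ℕ} (hk : k ≠ 0) :
    theta (q ^ a) (q ^ k) ^ 2 = ∑ c : Fin 5, q ^ (a * c + k * tri c) *
      (theta (q ^ (3 * a + k * (c + 1) : ℤ)) (q ^ (k * 5)) *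
        theta (q ^ (-a + k * (3 - 2 * c) : ℤ)) (q ^ (k * 5))) := by
  rw [theta_sq (norm_pow_lt_one hq hk) (zpow_ne_zero a hq0) (pow_ne_zero k hq0)]
  refine sum_congr rfl fun c _ => ?_
  rw [pow_mul]
  simp only [← zpow_natCast q, ← zpow_mul, ← zpow_add₀ hq0]
  ring_nf

variable {q : ℝ} (hq : ‖q‖ < 1) (hq0 : q ≠ 0)

include hq hq0

theorem phi_sq_sub_phi_sq : phi q ^ 2 - phi (q ^ 5) ^ 2 =
    4 * q * (theta q (q ^ 10) * theta (q ^ 3) (q ^ 10)) := by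
  have h_dissection : theta q (q ^ 2) ^ 2 = theta (q ^ 5) (q ^ 10) * theta (q ^ 5) (q ^ 10) +
      q * (theta (q ^ 7) (q ^ 10) * theta q (q ^ 10)) +
      q ^ 4 * (theta (q ^ 9) (q ^ 10) * theta (q ^ 3)⁻¹ (q ^ 10)) +
      q ^ 9 * (theta (q ^ 11) (q ^ 10) * theta (q ^ 7)⁻¹ (q ^ 10)) +
      q ^ 16 * (theta (q ^ 13) (q ^ 10) * theta (q ^ 11)⁻¹ (q ^ 10)) := by
    simpa [Fin.sum_univ_five, tri, zpow_ofNat, zpow_neg] using theta_zpow_sq hq hq0 1 two_ne_zero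
  have h_inv (m : ℕ) := theta_inv (pow_ne_zero m hq0) (pow_ne_zero 10 hq0)
  have h7 : theta (q ^ 7) (q ^ 10) = theta (q ^ 3) (q ^ 10) := theta_pow_eq_of_add_eq hq0 rfl
  have h9 : theta (q ^ 9) (q ^ 10) = theta (q ^ 1) (q ^ 10) := theta_pow_eq_of_add_eq hq0 rfl
  have h11 := theta_pow_add hq0 1 10
  have h13 := theta_pow_add hq0 3 10
  have h_phi := phi_eq_theta (pow_ne_zero 5 hq0)
  rw [← pow_mul] at h_phi
  rw [phi_eq_theta hq0, h_phi, h_dissection, h_inv, h_inv, h_inv, h11, h13, h7, h9, pow_one]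
  field_simp
  ring

theorem psi_sq_sub_mul_psi_sq : psi q ^ 2 - q * psi (q ^ 5) ^ 2 =
    theta q (q ^ 5) * theta (q ^ 2) (q ^ 5) := by
  have h_dissection : theta q q ^ 2 = theta (q ^ 4) (q ^ 5) * theta (q ^ 2) (q ^ 5) +
      q * (theta (q ^ 5) (q ^ 5) * theta 1 (q ^ 5)) +
      q ^ 3 * (theta (q ^ 6) (q ^ 5) * theta (q ^ 2)⁻¹ (q ^ 5)) +
      q ^ 6 * (theta (q ^ 7) (q ^ 5) * theta (q ^ 4)⁻¹ (q ^ 5)) +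
      q ^ 10 * (theta (q ^ 8) (q ^ 5) * theta (q ^ 6)⁻¹ (q ^ 5)) := by
    simpa [Fin.sum_univ_five, tri, zpow_ofNat, zpow_neg] using theta_zpow_sq hq hq0 1 one_ne_zero
  have h_inv (m : ℕ) := theta_inv (pow_ne_zero m hq0) (pow_ne_zero 5 hq0)
  have h_one := theta_div (pow_ne_zero 5 hq0) (1 : ℝ)
  have h3 : theta (q ^ 3) (q ^ 5) = theta (q ^ 2) (q ^ 5) := theta_pow_eq_of_add_eq hq0 rfl
  have h4 : theta (q ^ 4) (q ^ 5) = theta (q ^ 1) (q ^ 5) := theta_pow_eq_of_add_eq hq0 rfl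
  have h6 := theta_pow_add hq0 1 5
  have h7 := theta_pow_add hq0 2 5
  have h8 := theta_pow_add hq0 3 5
  have h_psi := two_mul_psi_eq_theta hq hq0
  have h_psi5 := two_mul_psi_eq_theta (norm_pow_lt_one hq (by norm_num)) (pow_ne_zero 5 hq0)
  rw [div_one] at h_one
  rw [← h_psi, h_inv, h_inv, h_inv, h6, h7, h8, h4, h3, ← h_one, ← h_psi5, pow_one] at h_dissection
  field_simp at h_dissection
  linear_combination h_dissection / 4

theorem psi_mul_phi_sub : psi (q ^ 2) * phi (q ^ 5) - q * (phi q * psi (q ^ 10)) =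
    fneg q * fneg (q ^ 5) := by
  have h_dissection : theta (q ^ 5) (q ^ 10) * theta (q ^ 2) (q ^ 2) -
      q * (theta (q ^ 10) (q ^ 10) * theta q (q ^ 2)) =
      theta (-q ^ 10) (q ^ 15) * theta (-q) (q ^ 3) +
      q ^ 2 * (theta (-q ^ 15) (q ^ 15) * theta (-1) (q ^ 3)) +
      q ^ 6 * (theta (-q ^ 20) (q ^ 15) * theta (-q⁻¹) (q ^ 3)) := by
    simpa [Fin.sum_univ_three, zpow_ofNat, ← sub_eq_add_neg] using
      theta_mul_add_theta_mul hq (neg_ne_zero.mpr one_ne_zero) hq0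
  have h_neg_one : theta (-1) (q ^ 3) = 0 := by
    rw [theta_eq_qPoch_mul (norm_pow_lt_one hq three_ne_zero) (neg_ne_zero.mpr one_ne_zero)
      (pow_ne_zero 3 hq0), neg_neg, qPoch_one_left, mul_zero]
  have h_phi := phi_eq_theta (pow_ne_zero 5 hq0)
  have h_fneg := fneg_eq_theta (pow_ne_zero 5 hq0)
  have h_inv := theta_inv (neg_ne_zero.mpr hq0) (pow_ne_zero 3 hq0)
  have h20 := theta_mul_left (neg_ne_zero.mpr (pow_ne_zero 5 hq0)) (pow_ne_zero 15 hq0)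
  have h10 := theta_div (pow_ne_zero 15 hq0) (-q ^ 5)
  have h_div : q ^ 15 / -q ^ 5 = -q ^ 10 := by field_simp
  have h_mul : -q ^ 5 * q ^ 15 = -q ^ 20 := by ring
  simp only [← pow_mul, Nat.reduceMul] at h_phi h_fneg
  rw [inv_neg] at h_inv
  rw [h_div] at h10
  rw [h_mul] at h20
  rw [h_neg_one, h_inv, h20, h10, ← fneg_eq_theta hq0, ← h_fneg, ← h_phi, ← phi_eq_theta hq0,
    ← two_mul_psi_eq_theta (norm_pow_lt_one hq two_ne_zero) (pow_ne_zero 2 hq0),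
    ← two_mul_psi_eq_theta (norm_pow_lt_one hq (by norm_num)) (pow_ne_zero 10 hq0)] at h_dissection
  field_simp at h_dissection
  linear_combination h_dissection / 2

theorem phi_eq_phi_add_psi : phi q = phi (q ^ 4) + 2 * q * psi (q ^ 8) := by
  have h := theta_eq_add (norm_pow_lt_one hq two_ne_zero) hq0 (pow_ne_zero 2 hq0)
  rw [phi_eq_theta hq0, phi_eq_theta (pow_ne_zero 4 hq0), h, mul_comm 2, mul_assoc,
    two_mul_psi_eq_theta (norm_pow_lt_one hq (by norm_num)) (pow_ne_zero 8 hq0)]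
  ring_nf

theorem phi_mul_phi_neg_sub : phi q * phi (-q ^ 5) - phi (-q) * phi (q ^ 5) =
    4 * q * (fneg (q ^ 4) * fneg (q ^ 20)) := by
  have hq_neg : ‖-q‖ < 1 := by rwa [norm_neg]
  have hq5 := norm_pow_lt_one hq (k := 5) (by norm_num)
  have hq5_neg : ‖-q ^ 5‖ < 1 := by rwa [norm_neg]
  have h1 := phi_eq_phi_add_psi hq hq0
  have h1_neg := phi_eq_phi_add_psi hq_neg (neg_ne_zero.mpr hq0)
  have h5 := phi_eq_phi_add_psi hq5 (pow_ne_zero 5 hq0)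
  have h5_neg := phi_eq_phi_add_psi hq5_neg (neg_ne_zero.mpr (pow_ne_zero 5 hq0))
  have h := psi_mul_phi_sub (norm_pow_lt_one hq four_ne_zero) (pow_ne_zero 4 hq0)
  rw [Even.neg_pow (by decide), Even.neg_pow (by decide)] at h1_neg h5_neg
  simp only [← pow_mul, Nat.reduceMul] at h5 h5_neg h
  rw [h1, h1_neg, h5, h5_neg]
  linear_combination 4 * q * h

end QuinticIdentities

section EtaRelations

variable {q : ℝ} (hq : ‖q‖ < 1) (hq0 : q ≠ 0)

include hq hq0

theorem fneg_relation_psi_sq : fneg (q ^ 2) ^ 4 * fneg (q ^ 5) ^ 2 * fneg (q ^ 10) =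
    q * (fneg q ^ 2 * fneg (q ^ 10) ^ 5) + fneg q * fneg (q ^ 2) * fneg (q ^ 5) ^ 5 := by
  have h := psi_sq_sub_mul_psi_sq hq hq0
  have h_theta := theta_fifths_mul_fneg hq hq0
  have h1 := psi_mul_fneg hq hq0
  have h5 := psi_mul_fneg (norm_pow_lt_one hq (by norm_num)) (pow_ne_zero 5 hq0)
  simp only [← pow_mul, Nat.reduceMul] at h5
  linear_combination (fneg q ^ 2 * fneg (q ^ 5) ^ 2 * fneg (q ^ 10)) * h
    - (fneg (q ^ 5) ^ 2 * fneg (q ^ 10)) * (psi q * fneg q + fneg (q ^ 2) ^ 2) * h1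
    + q * (fneg q ^ 2 * fneg (q ^ 10)) * (psi (q ^ 5) * fneg (q ^ 5) + fneg (q ^ 10) ^ 2) * h5
    + (fneg q * fneg (q ^ 5) ^ 2) * h_theta

theorem fneg_relation_phi_sq : fneg q ^ 4 * fneg (q ^ 5) * fneg (q ^ 10) ^ 2 =
    fneg (q ^ 2) ^ 2 * fneg (q ^ 5) ^ 5 -
      4 * q * (fneg q * fneg (q ^ 2) * fneg (q ^ 10) ^ 5) := by
  have h := phi_sq_sub_phi_sq (q := -q) (by rwa [norm_neg]) (neg_ne_zero.mpr hq0)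
  have h_theta := theta_neg_tenths_mul_fneg hq hq0
  have h1 := phi_neg_mul_fneg hq hq0
  have h5 := phi_neg_mul_fneg (norm_pow_lt_one hq (by norm_num)) (pow_ne_zero 5 hq0)
  rw [Odd.neg_pow (by decide), Even.neg_pow (by decide), Odd.neg_pow (by decide)] at h
  simp only [← pow_mul, Nat.reduceMul] at h5
  linear_combination (fneg (q ^ 2) ^ 2 * fneg (q ^ 10) ^ 2 * fneg (q ^ 5)) * h
    - (fneg (q ^ 10) ^ 2 * fneg (q ^ 5)) * (phi (-q) * fneg (q ^ 2) + fneg q ^ 2) * h1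
    + (fneg (q ^ 2) ^ 2 * fneg (q ^ 5)) *
      (phi (-q ^ 5) * fneg (q ^ 10) + fneg (q ^ 5) ^ 2) * h5
    - 4 * q * (fneg (q ^ 2) * fneg (q ^ 10) ^ 2) * h_theta

theorem fneg_relation_phi_mul_phi : fneg (q ^ 2) ^ 6 * fneg (q ^ 5) ^ 4 * fneg (q ^ 20) ^ 2 -
    fneg q ^ 4 * fneg (q ^ 10) ^ 6 * fneg (q ^ 4) ^ 2 =
      4 * q * (fneg (q ^ 4) ^ 3 * fneg (q ^ 20) ^ 3 * fneg q ^ 2 * fneg (q ^ 2) *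
        fneg (q ^ 5) ^ 2 * fneg (q ^ 10)) := by
  have hq5 := norm_pow_lt_one hq (k := 5) (by norm_num)
  have h := phi_mul_phi_neg_sub hq hq0
  have h1 := phi_mul_fneg hq hq0
  have h5 := phi_mul_fneg hq5 (pow_ne_zero 5 hq0)
  have h1_neg := phi_neg_mul_fneg hq hq0
  have h5_neg := phi_neg_mul_fneg hq5 (pow_ne_zero 5 hq0)
  simp only [← pow_mul, Nat.reduceMul] at h5 h5_neg
  linear_combination
    (fneg q ^ 2 * fneg (q ^ 2) * fneg (q ^ 4) ^ 2 * fneg (q ^ 5) ^ 2 * fneg (q ^ 10) *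
      fneg (q ^ 20) ^ 2) * h
    - (fneg (q ^ 2) * fneg (q ^ 5) ^ 2 * fneg (q ^ 20) ^ 2) *
      (phi q * (fneg q ^ 2 * fneg (q ^ 4) ^ 2) * h5_neg + fneg (q ^ 5) ^ 2 * h1)
    + (fneg q ^ 2 * fneg (q ^ 4) ^ 2 * fneg (q ^ 10)) *
      (phi (q ^ 5) * (fneg (q ^ 5) ^ 2 * fneg (q ^ 20) ^ 2) * h1_neg + fneg q ^ 2 * h5)

theorem fneg_relation_psi_mul_phi : fneg q ^ 2 * fneg (q ^ 4) ^ 4 * fneg (q ^ 10) ^ 6 =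
    q * (fneg (q ^ 2) ^ 6 * fneg (q ^ 5) ^ 2 * fneg (q ^ 20) ^ 4) +
      fneg q ^ 3 * fneg (q ^ 5) ^ 3 * fneg (q ^ 2) * fneg (q ^ 10) * fneg (q ^ 4) ^ 2 *
        fneg (q ^ 20) ^ 2 := by
  have h := psi_mul_phi_sub hq hq0
  have h2 := psi_mul_fneg (norm_pow_lt_one hq two_ne_zero) (pow_ne_zero 2 hq0)
  have h10 := psi_mul_fneg (norm_pow_lt_one hq (by norm_num)) (pow_ne_zero 10 hq0)
  have h1 := phi_mul_fneg hq hq0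
  have h5 := phi_mul_fneg (norm_pow_lt_one hq (by norm_num)) (pow_ne_zero 5 hq0)
  simp only [← pow_mul, Nat.reduceMul] at h2 h10 h5
  linear_combination
    (fneg q ^ 2 * fneg (q ^ 2) * fneg (q ^ 4) ^ 2 * fneg (q ^ 5) ^ 2 * fneg (q ^ 10) *
      fneg (q ^ 20) ^ 2) * h
    - (fneg q ^ 2 * fneg (q ^ 4) ^ 2 * fneg (q ^ 10)) *
      (phi (q ^ 5) * (fneg (q ^ 5) ^ 2 * fneg (q ^ 20) ^ 2) * h2 + fneg (q ^ 4) ^ 2 * h5)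
    + q * (fneg (q ^ 2) * fneg (q ^ 5) ^ 2 * fneg (q ^ 20) ^ 2) *
      (phi q * (fneg q ^ 2 * fneg (q ^ 4) ^ 2) * h10 + fneg (q ^ 20) ^ 2 * h1)

end EtaRelations

section ChiQuotient

/-- The eta quotient `χ(-q) / χ(-q⁵)`, where `χ(-q) = f(-q) / f(-q²)`; the function `C_n` of the
theorem is `q^(n/6)` times its value at `qⁿ`. -/
noncomputable def chiQuotient (q : ℝ) : ℝ :=
  fneg q * fneg (q ^ 10) / (fneg (q ^ 2) * fneg (q ^ 5))

variable {q : ℝ} (hq : ‖q‖ < 1) (hq0 : q ≠ 0)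

include hq hq0

theorem chiQuotient_ne_zero : chiQuotient q ≠ 0 :=
  div_ne_zero (mul_ne_zero (fneg_ne_zero hq hq0) (fneg_pow_ne_zero hq hq0 (by norm_num)))
    (mul_ne_zero (fneg_pow_ne_zero hq hq0 two_ne_zero) (fneg_pow_ne_zero hq hq0 (by norm_num)))

theorem chiQuotient_pow_ne_zero {k : ℕ} (hk : k ≠ 0) : chiQuotient (q ^ k) ≠ 0 :=
  chiQuotient_ne_zero (norm_pow_lt_one hq hk) (pow_ne_zero k hq0)

theorem chiQuotient_sq_sub : chiQuotient q ^ 2 - chiQuotient (q ^ 2) ^ 2 / chiQuotient q ^ 2 =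
    -(4 * q * (fneg (q ^ 4) * fneg (q ^ 20) ^ 3 / (fneg (q ^ 2) * fneg (q ^ 10) ^ 3))) := by
  have h1 := fneg_ne_zero hq hq0
  have h2 := fneg_pow_ne_zero hq hq0 two_ne_zero
  have h4 := fneg_pow_ne_zero hq hq0 four_ne_zero
  have h5 := fneg_pow_ne_zero hq hq0 (k := 5) (by norm_num)
  have h10 := fneg_pow_ne_zero hq hq0 (k := 10) (by norm_num)
  simp only [chiQuotient, ← pow_mul, Nat.reduceMul]
  field_simp
  linear_combination -fneg_relation_phi_mul_phi hq hq0

theorem mul_chiQuotient_sq_sub :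
    q * chiQuotient (q ^ 2) ^ 2 - chiQuotient q ^ 2 / chiQuotient (q ^ 2) ^ 2 =
      -(fneg q ^ 3 * fneg (q ^ 5) / (fneg (q ^ 2) ^ 3 * fneg (q ^ 10))) := by
  have h2 := fneg_pow_ne_zero hq hq0 two_ne_zero
  have h4 := fneg_pow_ne_zero hq hq0 four_ne_zero
  have h5 := fneg_pow_ne_zero hq hq0 (k := 5) (by norm_num)
  have h10 := fneg_pow_ne_zero hq hq0 (k := 10) (by norm_num)
  have h20 := fneg_pow_ne_zero hq hq0 (k := 20) (by norm_num)
  simp only [chiQuotient, ← pow_mul, Nat.reduceMul]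
  field_simp
  linear_combination -fneg_relation_psi_mul_phi hq hq0

theorem fneg_div_sq_sub_inv_chiQuotient_sq :
    (fneg q / fneg (q ^ 5)) ^ 2 - 1 / chiQuotient q ^ 2 =
      -(4 * q * (fneg (q ^ 2) * fneg (q ^ 10) ^ 3 / (fneg q * fneg (q ^ 5) ^ 3))) := by
  have h1 := fneg_ne_zero hq hq0
  have h5 := fneg_pow_ne_zero hq hq0 (k := 5) (by norm_num)
  have h10 := fneg_pow_ne_zero hq hq0 (k := 10) (by norm_num)
  simp only [chiQuotient]
  field_simp
  linear_combination fneg_relation_phi_sq hq hq0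

theorem mul_chiQuotient_pow_four_sub_fneg_div_sq :
    q * chiQuotient q ^ 4 - (fneg q / fneg (q ^ 5)) ^ 2 =
      -(fneg q ^ 3 * fneg (q ^ 5) / (fneg (q ^ 2) ^ 3 * fneg (q ^ 10))) := by
  have h1 := fneg_ne_zero hq hq0
  have h2 := fneg_pow_ne_zero hq hq0 two_ne_zero
  have h5 := fneg_pow_ne_zero hq hq0 (k := 5) (by norm_num)
  have h10 := fneg_pow_ne_zero hq hq0 (k := 10) (by norm_num)
  simp only [chiQuotient]
  field_simp
  linear_combination -fneg_relation_psi_sq hq hq0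

theorem chiQuotient_sub_mul_chiQuotient_sub :
    (chiQuotient q ^ 2 - chiQuotient (q ^ 2) ^ 2 / chiQuotient q ^ 2) *
        (q ^ 2 * chiQuotient (q ^ 4) ^ 2 - chiQuotient (q ^ 2) ^ 2 / chiQuotient (q ^ 4) ^ 2) =
      4 * q * chiQuotient (q ^ 2) ^ 2 := by
  have h2 := fneg_pow_ne_zero hq hq0 two_ne_zero
  have h4 := fneg_pow_ne_zero hq hq0 four_ne_zero
  have h10 := fneg_pow_ne_zero hq hq0 (k := 10) (by norm_num)
  have h20 := fneg_pow_ne_zero hq hq0 (k := 20) (by norm_num)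
  have h := mul_chiQuotient_sq_sub (norm_pow_lt_one hq two_ne_zero) (pow_ne_zero 2 hq0)
  simp only [← pow_mul, Nat.reduceMul] at h
  rw [chiQuotient_sq_sub hq hq0, h]
  simp only [chiQuotient, ← pow_mul, Nat.reduceMul]
  field_simp

theorem chiQuotient_sub_add_chiQuotient_sub :
    q * (chiQuotient q ^ 2 - chiQuotient (q ^ 2) ^ 2 / chiQuotient q ^ 2) +
        (q ^ 2 * chiQuotient (q ^ 4) ^ 2 - chiQuotient (q ^ 2) ^ 2 / chiQuotient (q ^ 4) ^ 2) =
      q ^ 2 * chiQuotient (q ^ 2) ^ 4 - 1 / chiQuotient (q ^ 2) ^ 2 := by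
  have hq2 := norm_pow_lt_one hq two_ne_zero
  have h := chiQuotient_sq_sub hq hq0
  have h_sq := mul_chiQuotient_sq_sub hq2 (pow_ne_zero 2 hq0)
  have h_inv := fneg_div_sq_sub_inv_chiQuotient_sq hq2 (pow_ne_zero 2 hq0)
  have h_pow := mul_chiQuotient_pow_four_sub_fneg_div_sq hq2 (pow_ne_zero 2 hq0)
  simp only [← pow_mul, Nat.reduceMul] at h_sq h_inv h_pow
  linear_combination q * h + h_sq - h_inv - h_pow

variable {s : ℝ} (hs : s ^ 6 = q)

include hs

theorem scaled_chiQuotient_sub_mul :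
    ((s * chiQuotient q) ^ 2 - (s ^ 2 * chiQuotient (q ^ 2)) ^ 2 / (s * chiQuotient q) ^ 2) *
        ((s ^ 4 * chiQuotient (q ^ 4)) ^ 2 -
          (s ^ 2 * chiQuotient (q ^ 2)) ^ 2 / (s ^ 4 * chiQuotient (q ^ 4)) ^ 2) =
      4 * (s ^ 2 * chiQuotient (q ^ 2)) ^ 2 := by
  have hs0 : s ≠ 0 := by
    rintro rfl
    simp [← hs] at hq0
  have h := chiQuotient_sub_mul_chiQuotient_sub hq hq0
  have h1 := chiQuotient_ne_zero hq hq0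
  have h4 := chiQuotient_pow_ne_zero hq hq0 four_ne_zero
  field_simp at h ⊢
  subst hs
  linear_combination h

theorem scaled_chiQuotient_sub_add :
    ((s * chiQuotient q) ^ 2 - (s ^ 2 * chiQuotient (q ^ 2)) ^ 2 / (s * chiQuotient q) ^ 2) +
        ((s ^ 4 * chiQuotient (q ^ 4)) ^ 2 -
          (s ^ 2 * chiQuotient (q ^ 2)) ^ 2 / (s ^ 4 * chiQuotient (q ^ 4)) ^ 2) =
      (s ^ 2 * chiQuotient (q ^ 2)) ^ 4 - 1 / (s ^ 2 * chiQuotient (q ^ 2)) ^ 2 := by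
  have hs0 : s ≠ 0 := by
    rintro rfl
    simp [← hs] at hq0
  have h := chiQuotient_sub_add_chiQuotient_sub hq hq0
  have h1 := chiQuotient_ne_zero hq hq0
  have h2 := chiQuotient_pow_ne_zero hq hq0 two_ne_zero
  have h4 := chiQuotient_pow_ne_zero hq hq0 four_ne_zero
  field_simp at h ⊢
  subst hs
  linear_combination h

end ChiQuotient

section ModularEquation

theorem modular_equation_of_resolvent {b Y x : ℝ} (hb : b ≠ 0) (hY : Y ≠ 0)
    (ht : b ^ 2 + 1 = (x ^ 2 + 2) * b) (hE : b ^ 3 * Y ^ 2 - 1 = x * (1 - b) * (b * Y)) :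
    (Y + 1 / Y) ^ 2 = x ^ 3 * (x ^ 2 + 3) * (Y + 1 / Y) + (x ^ 6 + 7 * x ^ 4 + 9 * x ^ 2 + 4) := by
  have h_norm : b ^ 3 * ((Y ^ 2 + 1) ^ 2 - x ^ 3 * (x ^ 2 + 3) * (Y ^ 2 + 1) * Y
      - (x ^ 6 + 7 * x ^ 4 + 9 * x ^ 2 + 4) * Y ^ 2) = 0 := by
    -- `hE` times its conjugate under `b ↦ 1 / b`, reduced modulo `ht`.
    linear_combination (Y ^ 2 - b ^ 3 + x * (1 - b) * (b * Y)) * hE +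
      (Y ^ 2 * ((b ^ 2 + 1) ^ 2 + (x ^ 2 + 2) * b * (b ^ 2 + 1) + (x ^ 4 + 5 * x ^ 2 + 1) * b ^ 2) +
        x * Y * (Y ^ 2 + 1) * b * (b ^ 2 + 1 + (x ^ 2 + 1) * b)) * ht
  have h_quartic := (mul_eq_zero.mp h_norm).resolve_left (pow_ne_zero 3 hb)
  field_simp
  linear_combination h_quartic

theorem modular_equation_of_relations {b c d : ℝ} (hb : b ≠ 0) (hc : c ≠ 0) (hd : d ≠ 0)
    (hmul : (c ^ 2 - b ^ 2 / c ^ 2) * (d ^ 2 - b ^ 2 / d ^ 2) = 4 * b ^ 2)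
    (hadd : (c ^ 2 - b ^ 2 / c ^ 2) + (d ^ 2 - b ^ 2 / d ^ 2) = b ^ 4 - 1 / b ^ 2) :
    ((c * d) ^ 3 + 1 / (c * d) ^ 3) ^ 2 =
      (c / d + 1 / (c / d)) ^ 3 * ((c / d + 1 / (c / d)) ^ 2 + 3) *
        ((c * d) ^ 3 + 1 / (c * d) ^ 3) +
      ((c / d + 1 / (c / d)) ^ 6 + 7 * (c / d + 1 / (c / d)) ^ 4 +
        9 * (c / d + 1 / (c / d)) ^ 2 + 4) := by
  refine modular_equation_of_resolvent (b := (b / (c * d)) ^ 2)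
    (by positivity) (by positivity) ?_ ?_
  · field_simp at hmul ⊢
    linear_combination hmul
  · field_simp at hadd ⊢
    linear_combination -hadd

theorem modular_equation_expand {P Q : ℝ} (hP : P ≠ 0) (hQ : Q ≠ 0)
    (h : (P ^ 3 + 1 / P ^ 3) ^ 2 =
      (Q + 1 / Q) ^ 3 * ((Q + 1 / Q) ^ 2 + 3) * (P ^ 3 + 1 / P ^ 3) +
        ((Q + 1 / Q) ^ 6 + 7 * (Q + 1 / Q) ^ 4 + 9 * (Q + 1 / Q) ^ 2 + 4)) :
    (P ^ 3 + 1 / P ^ 3) * (19 * (Q + 1 / Q) + 8 * (Q ^ 3 + 1 / Q ^ 3) + (Q ^ 5 + 1 / Q ^ 5))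
      + (Q ^ 6 + 1 / Q ^ 6) + 13 * (Q ^ 4 + 1 / Q ^ 4) + 52 * (Q ^ 2 + 1 / Q ^ 2) + 82 =
    P ^ 6 + 1 / P ^ 6 := by
  have h_lhs : P ^ 6 + 1 / P ^ 6 = (P ^ 3 + 1 / P ^ 3) ^ 2 - 2 := by
    field_simp
    ring
  have h_odd : 19 * (Q + 1 / Q) + 8 * (Q ^ 3 + 1 / Q ^ 3) + (Q ^ 5 + 1 / Q ^ 5) =
      (Q + 1 / Q) ^ 3 * ((Q + 1 / Q) ^ 2 + 3) := by
    field_simp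
    ring
  have h_even :
      (Q ^ 6 + 1 / Q ^ 6) + 13 * (Q ^ 4 + 1 / Q ^ 4) + 52 * (Q ^ 2 + 1 / Q ^ 2) + 82 =
        (Q + 1 / Q) ^ 6 + 7 * (Q + 1 / Q) ^ 4 + 9 * (Q + 1 / Q) ^ 2 + 2 := by
    field_simp
    ring
  rw [h_lhs, h_odd, h]
  linear_combination h_even

end ModularEquation

theorem stmt_9 (q C₁ C₄ P Q : ℝ) (hq0 : 0 < q) (hq1 : q < 1)
    (hC1 : C₁ = q ^ ((1 : ℝ) / 6) * fneg q * fneg (q ^ 10) /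
      (fneg (q ^ 2) * fneg (q ^ 5)))
    (hC4 : C₄ = q ^ ((2 : ℝ) / 3) * fneg (q ^ 4) * fneg (q ^ 40) /
      (fneg (q ^ 8) * fneg (q ^ 20)))
    (hP : P = C₁ * C₄) (hQ : Q = C₁ / C₄) :
    (P ^ 3 + 1 / P ^ 3) * (19 * (Q + 1 / Q) + 8 * (Q ^ 3 + 1 / Q ^ 3)
        + (Q ^ 5 + 1 / Q ^ 5))
      + (Q ^ 6 + 1 / Q ^ 6) + 13 * (Q ^ 4 + 1 / Q ^ 4)
      + 52 * (Q ^ 2 + 1 / Q ^ 2) + 82 = P ^ 6 + 1 / P ^ 6 := by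
  have hq : ‖q‖ < 1 := by rwa [norm_eq_abs, abs_of_pos hq0]
  obtain ⟨s, hs⟩ : ∃ s, s = q ^ (1 / 6 : ℝ) := ⟨_, rfl⟩
  have hs0 : s ≠ 0 := hs ▸ (rpow_pos_of_pos hq0 _).ne'
  have h_six : s ^ 6 = q := by norm_num [hs, ← rpow_mul_natCast hq0.le]
  have h_four : s ^ 4 = q ^ (2 / 3 : ℝ) := by norm_num [hs, ← rpow_mul_natCast hq0.le]
  have h_C₁ : C₁ = s * chiQuotient q := by rw [hC1, hs, chiQuotient, mul_assoc, mul_div_assoc]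
  have h_C₄ : C₄ = s ^ 4 * chiQuotient (q ^ 4) := by
    rw [hC4, h_four, chiQuotient, ← pow_mul, ← pow_mul, ← pow_mul, mul_assoc, mul_div_assoc]
  have hC₁_ne : C₁ ≠ 0 := h_C₁ ▸ mul_ne_zero hs0 (chiQuotient_ne_zero hq hq0.ne')
  have hC₄_ne : C₄ ≠ 0 := h_C₄ ▸
    mul_ne_zero (pow_ne_zero 4 hs0) (chiQuotient_pow_ne_zero hq hq0.ne' four_ne_zero)
  have hC₂_ne : s ^ 2 * chiQuotient (q ^ 2) ≠ 0 :=
    mul_ne_zero (pow_ne_zero 2 hs0) (chiQuotient_pow_ne_zero hq hq0.ne' two_ne_zero)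
  rw [hP, hQ]
  refine modular_equation_expand (mul_ne_zero hC₁_ne hC₄_ne) (div_ne_zero hC₁_ne hC₄_ne)
    (modular_equation_of_relations hC₂_ne hC₁_ne hC₄_ne ?_ ?_) <;> rw [h_C₁, h_C₄]
  · exact scaled_chiQuotient_sub_mul hq hq0.ne' h_six
  · exact scaled_chiQuotient_sub_add hq hq0.ne' h_six
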